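/- arXiv:2206.02007 — 2 statements merged into one kernel-verified Lean document; each statement's English description precedes it below -/
import Mathlib

section
/- Fix n ≥ 2. In every stabilizing sequence of labeled chip-firing with chips 1, …, 2^n − 1, the root fires exactly 2^n − (n + 1) times. Moreover, if c is any labeled configuration reachable from the initial configuration in which the root holds exactly 3 chips, every node on levels 2, …, n − 1 holds exactly 2 chips, and every other node holds no chips, then all stabilizing sequences starting from c end in the same terminal configuration (the order of the remaining firings does not affect the terminal configuration). -/
/-!
Only the numbers of chips matter for most of the argument. If `u v` is the number of times the
node `v` fires, then the number of chips at `v` changes by the Laplacian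
`lap u v = u (v / 2) + u (2 v) + u (2 v + 1) - 3 u v` (plus `u 1` at the root, for the self-loop);
see `card_fire`.

*Root count.* Let `U v = 2 ^ m - (m + 1)` with `m = n + 1 - level v`. Firing every node `U v`
times would turn the initial configuration into one chip on each node of levels `1, …, n`
(`odometer_lap`). By the least action argument (`least_action`) a legal sequence never fires `v`
more than `U v` times, so the deficit `w = U - u` is nonnegative. In a terminal configuration
the deficit satisfies `lap w v ≥ -1` on levels `≤ n`, and it vanishes from level `n` on.
Going up from the bottom, `w v ≥ 1` forces `w (v / 2) ≥ w v + 1`, and at the root this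
contradicts `lap w 1 ≥ -1`; hence `w 1 = 0` (`deficit_root`).

*Uniqueness of the end.* Along any firing sequence starting from `c`, the difference
`d v = u (v / 2) - u v` stays in `{0, 1}` for every `v ≥ 2`, and a non-root node on levels
`≤ n - 1` holds `2 + d v - d (2 v) - d (2 v + 1)` chips, the root `3 - d 2 - d 3`. So no node ever
holds more than three chips (`BalancedConfig.card_le`), and the chips of a firing are determined by
the node. Two different legal moves then involve disjoint triples of chips and commute, and
the diamond property (`exchange`) gives a unique terminal configuration.
-/

/-- The level of node `i` in the infinite binary tree: `⌊log₂ i⌋ + 1`. -/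
def level (i : ℕ) : ℕ := Nat.log 2 i + 1

/-- The parent of node `i`; the root (node 1) is its own parent via the self-loop. -/
def parent (i : ℕ) : ℕ := if i = 1 then 1 else i / 2

/-- A labeled configuration records, for each chip label, the node currently holding it. -/
abbrev LConfig := ℕ → ℕ

/-- A firing move: the node fired together with the three chosen chip labels
`a < b < c` (smallest, middle, largest). -/
abbrev Move := ℕ × ℕ × ℕ × ℕ

/-- Firing chips `a < b < c` at node `i`: the smallest chip `a` goes to the left child `2i`,
the largest chip `c` goes to the right child `2i + 1`, and the middle chip `b` goes to the
parent (back to the root via the self-loop when `i = 1`). -/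
def LFire (i a b c : ℕ) (f : LConfig) : LConfig := fun x =>
  if x = a then 2 * i else if x = b then parent i else if x = c then 2 * i + 1 else f x

/-- Applying a sequence of labeled firing moves. -/
def LFireSeq : List Move → LConfig → LConfig
  | [], f => f
  | (i, a, b, c) :: l, f => LFireSeq l (LFire i a b c f)

/-- A sequence of labeled firing moves is legal (for chips labeled `1, …, M`) if at each step
the fired node is a positive integer and the three chosen chips `a < b < c` are labels in
`{1, …, M}` all currently located at that node. -/
def LLegalSeq (M : ℕ) : List Move → LConfig → Prop
  | [], _ => True
  | (i, a, b, c) :: l, f => 1 ≤ i ∧ 1 ≤ a ∧ c ≤ M ∧ a < b ∧ b < c ∧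
      f a = i ∧ f b = i ∧ f c = i ∧ LLegalSeq M l (LFire i a b c f)

/-- The set of chips (among labels `1, …, M`) held by node `v`. -/
def chipsAt (M : ℕ) (f : LConfig) (v : ℕ) : Finset ℕ :=
  (Finset.Icc 1 M).filter (fun x => f x = v)

/-- A labeled configuration is terminal if every node holds at most 2 chips. -/
def LTerminal (M : ℕ) (f : LConfig) : Prop := ∀ v, 1 ≤ v → (chipsAt M f v).card ≤ 2

/-- A labeled configuration is reachable if some finite sequence of legal firings from the
initial configuration (all chips `1, …, M` at the root) produces it. -/
def LReachable (M : ℕ) (f : LConfig) : Prop :=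
  ∃ l, LLegalSeq M l (fun _ => 1) ∧ f = LFireSeq l (fun _ => 1)

/-- Node `j` lies in the subtree of node `i` iff `⌊j / 2^t⌋ = i` for some `t ≥ 0`. -/
def inSubtree (i j : ℕ) : Prop := ∃ t, j / 2 ^ t = i

/-! ### Counting chips -/

/-- The legality condition of a single move. -/
def MoveOk (M : ℕ) (m : Move) (f : LConfig) : Prop :=
  1 ≤ m.1 ∧ 1 ≤ m.2.1 ∧ m.2.2.2 ≤ M ∧ m.2.1 < m.2.2.1 ∧ m.2.2.1 < m.2.2.2 ∧
    f m.2.1 = m.1 ∧ f m.2.2.1 = m.1 ∧ f m.2.2.2 = m.1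

/-- The configuration after a single move. -/
def applyMove (m : Move) (f : LConfig) : LConfig := LFire m.1 m.2.1 m.2.2.1 m.2.2.2 f

lemma legal_cons (M : ℕ) (m : Move) (l : List Move) (f : LConfig) :
    LLegalSeq M (m :: l) f ↔ MoveOk M m f ∧ LLegalSeq M l (applyMove m f) := by
  obtain ⟨i, a, b, c⟩ := m
  simp only [LLegalSeq, MoveOk, applyMove]
  tauto

lemma fireSeq_cons (m : Move) (l : List Move) (f : LConfig) :
    LFireSeq (m :: l) f = LFireSeq l (applyMove m f) := rfl

/-- The change in the number of chips at `v` when every node `i` fires `u i` times. The formula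
is meant for `v ≥ 1` and `u 0 = 0`, so that the term `u (v / 2)` is absent at the root. -/
def lap (u : ℕ → ℤ) (v : ℕ) : ℤ :=
  u (v / 2) + u (2 * v) + u (2 * v + 1) - 3 * u v + if v = 1 then u 1 else 0

lemma card_update (M : ℕ) (f : LConfig) (a w v : ℕ) (ha : 1 ≤ a) (haM : a ≤ M) :
    ((chipsAt M (Function.update f a w) v).card : ℤ) =
      (chipsAt M f v).card - (if f a = v then 1 else 0) + (if w = v then 1 else 0) := by
  have hmem : a ∈ Finset.Icc 1 M := Finset.mem_Icc.2 ⟨ha, haM⟩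
  simp only [chipsAt, Finset.card_filter]
  push_cast
  rw [← Finset.add_sum_erase _ _ hmem,
    ← Finset.add_sum_erase _ (fun x => if f x = v then (1 : ℤ) else 0) hmem]
  have : ∑ x ∈ (Finset.Icc 1 M).erase a, (if Function.update f a w x = v then (1 : ℤ) else 0) =
      ∑ x ∈ (Finset.Icc 1 M).erase a, (if f x = v then (1 : ℤ) else 0) := by
    refine Finset.sum_congr rfl fun x hx => ?_
    rw [Function.update_of_ne (Finset.ne_of_mem_erase hx)]
  rw [this]
  simp only [Function.update_self]
  ring

lemma applyMove_eq_update (m : Move) (f : LConfig)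
    (h1 : m.2.1 < m.2.2.1) (h2 : m.2.2.1 < m.2.2.2) :
    applyMove m f = Function.update (Function.update (Function.update f m.2.1 (2 * m.1))
      m.2.2.1 (parent m.1)) m.2.2.2 (2 * m.1 + 1) := by
  funext x
  simp only [applyMove, LFire, Function.update_apply]
  split_ifs <;> first | rfl | omega

/-- A legal firing of node `i` changes the chip counts by the Laplacian of the indicator
of `i`. -/
lemma card_fire (M : ℕ) (m : Move) (f : LConfig) (h : MoveOk M m f) (v : ℕ) (hv : 1 ≤ v) :
    ((chipsAt M (applyMove m f) v).card : ℤ) =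
      (chipsAt M f v).card + lap (Pi.single m.1 1) v := by
  obtain ⟨hi, ha, hc, hab, hbc, fa, fb, fc⟩ := h
  rw [applyMove_eq_update m f hab hbc, card_update _ _ _ _ _ (by omega) hc,
    card_update _ _ _ _ _ (by omega) (by omega), card_update _ _ _ _ _ ha (by omega)]
  rw [Function.update_of_ne (by omega), Function.update_of_ne (by omega),
    Function.update_of_ne (by omega), fa, fb, fc]
  have hchild : (if v / 2 = m.1 then (1 : ℤ) else 0) =
      (if 2 * m.1 = v then 1 else 0) + (if 2 * m.1 + 1 = v then 1 else 0) := by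
    split_ifs <;> omega
  have hparent : (if parent m.1 = v then (1 : ℤ) else 0) =
      (if 2 * v = m.1 then 1 else 0) + (if 2 * v + 1 = m.1 then 1 else 0) +
        (if v = 1 then (if 1 = m.1 then 1 else 0) else 0) := by
    unfold parent
    by_cases h1 : m.1 = 1
    · rw [if_pos h1, if_pos h1.symm]
      split_ifs <;> omega
    · rw [if_neg h1, if_neg (Ne.symm h1)]
      split_ifs <;> omega
  simp only [lap, Pi.single_apply]
  rw [hchild, hparent, if_congr (eq_comm : m.1 = v ↔ v = m.1) rfl rfl]
  ring

lemma three_le_card (M : ℕ) (m : Move) (f : LConfig) (h : MoveOk M m f) :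
    {m.2.1, m.2.2.1, m.2.2.2} ⊆ chipsAt M f m.1 ∧
      ({m.2.1, m.2.2.1, m.2.2.2} : Finset ℕ).card = 3 ∧ 3 ≤ (chipsAt M f m.1).card := by
  obtain ⟨hi, ha, hc, hab, hbc, fa, fb, fc⟩ := h
  have hsub : {m.2.1, m.2.2.1, m.2.2.2} ⊆ chipsAt M f m.1 := by
    intro x hx
    simp only [Finset.mem_insert, Finset.mem_singleton] at hx
    simp only [chipsAt, Finset.mem_filter, Finset.mem_Icc]
    rcases hx with rfl | rfl | rfl
    · exact ⟨⟨by omega, by omega⟩, fa⟩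
    · exact ⟨⟨by omega, by omega⟩, fb⟩
    · exact ⟨⟨by omega, by omega⟩, fc⟩
  have hcard : ({m.2.1, m.2.2.1, m.2.2.2} : Finset ℕ).card = 3 :=
    Finset.card_eq_three.2 ⟨_, _, _, by omega, by omega, by omega, rfl⟩
  exact ⟨hsub, hcard, hcard ▸ Finset.card_le_card hsub⟩

lemma lap_add (u w : ℕ → ℤ) (v : ℕ) : lap (u + w) v = lap u v + lap w v := by
  simp only [lap, Pi.add_apply]
  split_ifs <;> ring

lemma lap_sub (u w : ℕ → ℤ) (v : ℕ) : lap (u - w) v = lap u v - lap w v := by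
  simp only [lap, Pi.sub_apply]
  split_ifs <;> ring

/-! ### Levels -/

lemma level_half (v : ℕ) (hv : 2 ≤ v) : level v = level (v / 2) + 1 := by
  simp only [level]
  rw [Nat.log_of_one_lt_of_le (by norm_num) hv]

lemma level_left (v : ℕ) (hv : 1 ≤ v) : level (2 * v) = level v + 1 := by
  rw [level_half _ (by omega)]
  congr 2
  omega

lemma level_right (v : ℕ) (hv : 1 ≤ v) : level (2 * v + 1) = level v + 1 := by
  rw [level_half _ (by omega)]
  congr 2
  omega

lemma level_one : level 1 = 1 := by simp [level]

lemma level_pos (v : ℕ) : 1 ≤ level v := by simp [level]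

lemma two_le_level (v : ℕ) (hv : 2 ≤ v) : 2 ≤ level v := by
  rw [level_half v hv]
  have := level_pos (v / 2)
  omega

/-! ### The number of root firings -/

/-- Least action: if firing each node `v` another `w v` times would lead to at most two chips
everywhere, then a legal sequence fires `v` at most `w v` times. -/
lemma least_action (M : ℕ) (T : ℕ → ℤ) (hT : ∀ v, T v ≤ 2) (l : List Move) :
    ∀ (f : LConfig) (w : ℕ → ℤ), (∀ v, 0 ≤ w v) →
      (∀ v, 1 ≤ v → ((chipsAt M f v).card : ℤ) = T v - lap w v) → LLegalSeq M l f →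
      ∃ w' : ℕ → ℤ, (∀ v, 0 ≤ w' v) ∧
        (∀ v, w' v = w v - (l.map (fun m => m.1)).count v) ∧
        (∀ v, 1 ≤ v → ((chipsAt M (LFireSeq l f) v).card : ℤ) = T v - lap w' v) := by
  induction l with
  | nil => intro f w hw hc _; exact ⟨w, hw, by simp, hc⟩
  | cons m l ih =>
    intro f w hw hc hl
    rw [legal_cons] at hl
    obtain ⟨hm, hl⟩ := hl
    have h3 := (three_le_card M m f hm).2.2
    have hpos : 1 ≤ w m.1 := by
      by_contra hcon
      have h0 : w m.1 = 0 := by have := hw m.1; omega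
      have hcm := hc m.1 hm.1
      have hTm := hT m.1
      have : 0 ≤ lap w m.1 := by
        simp only [lap, h0]
        have := hw (m.1 / 2)
        have := hw (2 * m.1)
        have := hw (2 * m.1 + 1)
        have := hw 1
        split_ifs <;> linarith
      omega
    obtain ⟨w', h1, h2, h3⟩ := ih (applyMove m f) (w - Pi.single m.1 1)
      (by
        intro v
        have := hw v
        simp only [Pi.sub_apply, Pi.single_apply]
        split_ifs with h
        · subst h; omega
        · omega)
      (by
        intro v hv
        rw [card_fire M m f hm v hv, hc v hv, lap_sub]
        ring) hl
    refine ⟨w', h1, ?_, h3⟩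
    intro v
    rw [h2 v]
    simp only [Pi.sub_apply, Pi.single_apply, List.map_cons, List.count_cons, beq_iff_eq]
    push_cast
    split_ifs <;> omega

/-- The number of firings of node `v` during a full stabilization: `2 ^ m - (m + 1)` with
`m = n + 1 - level v` (truncated, so the value is `0` from level `n` on). -/
def odometer (n v : ℕ) : ℤ :=
  if v = 0 then 0 else 2 ^ (n + 1 - level v) - ((n + 1 - level v : ℕ) + 1)

lemma odometer_nonneg (n v : ℕ) : 0 ≤ odometer n v := by
  unfold odometer
  split_ifs
  · rfl
  · have : n + 1 - level v + 1 ≤ 2 ^ (n + 1 - level v) := Nat.lt_two_pow_self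
    have h2 : (((n + 1 - level v : ℕ) + 1 : ℕ) : ℤ) ≤ ((2 ^ (n + 1 - level v) : ℕ) : ℤ) := by
      exact_mod_cast this
    push_cast at h2
    linarith

/-- The initial configuration followed by `odometer` firings gives one chip on every node of
levels `1, …, n`. -/
lemma odometer_lap (n : ℕ) (hn : 2 ≤ n) (v : ℕ) (hv : 1 ≤ v) :
    ((chipsAt (2 ^ n - 1) (fun _ => 1) v).card : ℤ) =
      (if level v ≤ n then 1 else 0) - lap (odometer n) v := by
  have hl := level_left v hv
  have hr := level_right v hv
  rcases Nat.lt_or_ge 1 v with h | h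
  · have hh := level_half v h
    have hp := level_pos (v / 2)
    have hcard : chipsAt (2 ^ n - 1) (fun _ => 1) v = ∅ := by
      simp only [chipsAt]
      rw [Finset.filter_eq_empty_iff]
      intros; omega
    rw [hcard]
    simp only [lap, odometer, hl, hr]
    rw [if_neg (show v / 2 ≠ 0 by omega), if_neg (show 2 * v ≠ 0 by omega),
      if_neg (show 2 * v + 1 ≠ 0 by omega), if_neg (show v ≠ 0 by omega),
      if_neg (show v ≠ 1 by omega)]
    by_cases hk : level v ≤ n
    · rw [if_pos hk]
      obtain ⟨j, hj⟩ := Nat.exists_eq_add_of_le hk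
      rw [show n + 1 - level (v / 2) = j + 2 by omega, show n + 1 - (level v + 1) = j by omega,
        show n + 1 - level v = j + 1 by omega]
      push_cast
      rw [Finset.card_empty]
      push_cast
      ring
    · rw [if_neg hk, show n + 1 - (level v + 1) = 0 by omega, show n + 1 - level v = 0 by omega]
      rcases Nat.lt_or_ge (n + 1) (level v) with h' | h'
      · rw [show n + 1 - level (v / 2) = 0 by omega]; simp
      · rw [show n + 1 - level (v / 2) = 1 by omega]; simp
  · obtain rfl : v = 1 := by omega
    have hcard : (chipsAt (2 ^ n - 1) (fun _ => 1) 1).card = 2 ^ n - 1 := by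
      simp [chipsAt]
    obtain ⟨j, rfl⟩ := Nat.exists_eq_add_of_le hn
    rw [hcard, Nat.cast_sub Nat.one_le_two_pow, if_pos (by rw [level_one]; omega)]
    simp only [lap, odometer, hl, hr, level_one]
    rw [show 2 + j + 1 - (1 + 1) = j + 1 by omega, show 2 + j + 1 - 1 = j + 2 by omega]
    simp
    ring

/-- A nonnegative function that vanishes from level `n` on and has Laplacian at least `-1` on
levels `≤ n` vanishes at the root: positive values would strictly increase going up. -/
lemma deficit_root (n : ℕ) (w : ℕ → ℤ) (hw : ∀ v, 0 ≤ w v)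
    (h0 : w 0 = 0) (hbot : ∀ v, n ≤ level v → w v = 0)
    (hlap : ∀ v, 1 ≤ v → level v ≤ n → -1 ≤ lap w v) : w 1 = 0 := by
  have key : ∀ k v, 2 ≤ v → n ≤ level v + k → 1 ≤ w v → w v + 1 ≤ w (v / 2) := by
    intro k
    induction k with
    | zero => intro v _ hk hv; have := hbot v hk; omega
    | succ k ih =>
      intro v h2 hk hv
      have hlv : level v ≤ n := by
        by_contra hcon
        have := hbot v (by omega)
        omega
      have hL := hlap v (by omega) hlv
      have h1 := ih (2 * v) (by omega) (by rw [level_left v (by omega)]; omega)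
      have h2' := ih (2 * v + 1) (by omega) (by rw [level_right v (by omega)]; omega)
      rw [show 2 * v / 2 = v by omega] at h1
      rw [show (2 * v + 1) / 2 = v by omega] at h2'
      simp only [lap, if_neg (show v ≠ 1 by omega)] at hL
      omega
  by_contra hcon
  have hpos := hw 1
  have h1n : level 1 ≤ n := by
    by_contra h
    exact hcon (hbot 1 (by omega))
  have hL := hlap 1 le_rfl h1n
  have h1 := key n 2 le_rfl (by omega)
  have h2 := key n 3 (by omega) (by omega)
  norm_num [lap, h0] at hL h1 h2
  omega

lemma root_count (n : ℕ) (hn : 2 ≤ n) (l : List Move)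
    (hl : LLegalSeq (2 ^ n - 1) l (fun _ => 1))
    (ht : LTerminal (2 ^ n - 1) (LFireSeq l (fun _ => 1))) :
    (l.map (fun m => m.1)).count 1 = 2 ^ n - (n + 1) := by
  obtain ⟨w, hw, hcount, hcard⟩ := least_action (2 ^ n - 1) (fun v => if level v ≤ n then 1 else 0)
    (by intro v; split_ifs <;> norm_num) l (fun _ => 1) (odometer n)
    (odometer_nonneg n) (odometer_lap n hn) hl
  have hle : ∀ v, w v ≤ odometer n v := fun v => by rw [hcount v]; omega
  have h0 : w 0 = 0 := le_antisymm (by simpa [odometer] using hle 0) (hw 0)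
  have hbot : ∀ v, n ≤ level v → w v = 0 := by
    intro v hv
    refine le_antisymm ((hle v).trans ?_) (hw v)
    unfold odometer
    split_ifs
    · rfl
    · rcases Nat.lt_or_ge n (level v) with h | h
      · rw [show n + 1 - level v = 0 by omega]; simp
      · rw [show n + 1 - level v = 1 by omega]; simp
  have hroot := deficit_root n w hw h0 hbot (by
    intro v hv hlv
    have h1 := hcard v hv
    have h2 := ht v hv
    rw [if_pos hlv] at h1
    omega)
  have h1 := hcount 1
  rw [hroot] at h1
  simp only [odometer, level_one, Nat.add_sub_cancel, one_ne_zero, if_false] at h1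
  have h2 : (((l.map (fun m => m.1)).count 1 : ℕ) : ℤ) + (n + 1) = ((2 ^ n : ℕ) : ℤ) := by
    push_cast
    linarith
  have h3 : (l.map (fun m => m.1)).count 1 + (n + 1) = 2 ^ n := by exact_mod_cast h2
  omega

/-! ### Uniqueness of the terminal configuration -/

/-- The numbers of chips in the special configuration: three at the root, two on levels
`2, …, n - 1` and none below. -/
def startCount (n v : ℕ) : ℤ := if v = 1 then 3 else if level v ≤ n - 1 then 2 else 0

/-- The chip counts of `f` arise from `startCount` by firing each node `v` exactly `u v` times,
where nothing on levels `≥ n` has fired and every node has fired as often as its parent or once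
less. -/
def BalancedConfig (n : ℕ) (f : LConfig) : Prop :=
  ∃ u : ℕ → ℤ, u 0 = 0 ∧ (∀ v, n ≤ level v → u v = 0) ∧
    (∀ v, 2 ≤ v → u v ≤ u (v / 2) ∧ u (v / 2) ≤ u v + 1) ∧
    ∀ v, 1 ≤ v → ((chipsAt (2 ^ n - 1) f v).card : ℤ) = startCount n v + lap u v

/-- If a node can fire in a balanced configuration, it holds exactly three chips,
lies strictly above level `n`, has fired as often as each of its children and, unless it is the root,
once less than its parent. -/
lemma balanced_aux (n : ℕ) (hn : 2 ≤ n) (f : LConfig) (u : ℕ → ℤ) (h0 : u 0 = 0)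
    (hbot : ∀ v, n ≤ level v → u v = 0)
    (hd : ∀ v, 2 ≤ v → u v ≤ u (v / 2) ∧ u (v / 2) ≤ u v + 1)
    (hcard : ∀ v, 1 ≤ v → ((chipsAt (2 ^ n - 1) f v).card : ℤ) = startCount n v + lap u v)
    (v : ℕ) (hv : 1 ≤ v) (h3 : 3 ≤ (chipsAt (2 ^ n - 1) f v).card) :
    (chipsAt (2 ^ n - 1) f v).card = 3 ∧ level v < n ∧ u (2 * v) = u v ∧ u (2 * v + 1) = u v ∧
      (2 ≤ v → u (v / 2) = u v + 1) := by
  have hc := hcard v hv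
  have hl := hd (2 * v) (by omega)
  have hr := hd (2 * v + 1) (by omega)
  rw [show 2 * v / 2 = v by omega] at hl
  rw [show (2 * v + 1) / 2 = v by omega] at hr
  rcases Nat.lt_or_ge 1 v with h | h
  · have hp := hd v h
    simp only [startCount, lap, if_neg (show v ≠ 1 by omega)] at hc
    by_cases hlv : level v ≤ n - 1
    · rw [if_pos hlv] at hc
      refine ⟨?_, ?_, ?_, ?_, fun _ => ?_⟩ <;> omega
    · rw [if_neg hlv] at hc
      have e1 := hbot v (by omega)
      have e2 := hbot (2 * v) (by rw [level_left v hv]; omega)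
      have e3 := hbot (2 * v + 1) (by rw [level_right v hv]; omega)
      omega
  · obtain rfl : v = 1 := by omega
    norm_num [startCount, lap, h0] at hc
    norm_num at hl hr
    refine ⟨?_, ?_, ?_, ?_, ?_⟩
    · omega
    · rw [level_one]; omega
    · norm_num; omega
    · norm_num; omega
    · intro h; omega

lemma BalancedConfig.card_le {n : ℕ} (hn : 2 ≤ n) {f : LConfig} (hf : BalancedConfig n f) (v : ℕ)
    (hv : 1 ≤ v) : (chipsAt (2 ^ n - 1) f v).card ≤ 3 := by
  obtain ⟨u, h0, hbot, hd, hcard⟩ := hf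
  by_contra hcon
  have := (balanced_aux n hn f u h0 hbot hd hcard v hv (by omega)).1
  omega

lemma BalancedConfig.fire {n : ℕ} (hn : 2 ≤ n) {f : LConfig} (hf : BalancedConfig n f) {m : Move}
    (hm : MoveOk (2 ^ n - 1) m f) : BalancedConfig n (applyMove m f) := by
  obtain ⟨u, h0, hbot, hd, hcard⟩ := hf
  have hi := hm.1
  obtain ⟨-, hlev, el, er, ep⟩ := balanced_aux n hn f u h0 hbot hd hcard m.1 hm.1
    (three_le_card _ m f hm).2.2
  refine ⟨u + Pi.single m.1 1, ?_, ?_, ?_, ?_⟩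
  · simp only [Pi.add_apply, Pi.single_apply, h0]
    rw [if_neg (by omega)]
    rfl
  · intro v hv
    simp only [Pi.add_apply, Pi.single_apply, hbot v hv]
    rw [if_neg (by rintro rfl; omega)]
    rfl
  · intro v hv
    have h := hd v hv
    simp only [Pi.add_apply, Pi.single_apply]
    by_cases hvi : v = m.1
    · have := ep (by omega)
      rw [if_pos hvi, if_neg (by omega)]
      rw [← hvi] at this
      omega
    · rw [if_neg hvi]
      by_cases hpi : v / 2 = m.1
      · rw [if_pos hpi, hpi]
        rw [hpi] at h
        have : u v = u m.1 := by
          rcases Nat.mod_two_eq_zero_or_one v with h' | h'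
          · rw [← el]; congr 1; omega
          · rw [← er]; congr 1; omega
        omega
      · rw [if_neg hpi]
        omega
  · intro v hv
    rw [card_fire _ m f hm v hv, hcard v hv, lap_add]
    ring

/-- In a balanced configuration, the node determines the legal move, since it holds exactly
three chips. Moves at different nodes use disjoint sets of chips. -/
lemma move_eq_or_node_ne {n : ℕ} (hn : 2 ≤ n) {f : LConfig} (hf : BalancedConfig n f) {m m' : Move}
    (hm : MoveOk (2 ^ n - 1) m f) (hm' : MoveOk (2 ^ n - 1) m' f) :
    m = m' ∨ m.1 ≠ m'.1 := by
  by_cases h : m.1 = m'.1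
  · left
    obtain ⟨s, k, -⟩ := three_le_card _ m f hm
    obtain ⟨s', k', -⟩ := three_le_card _ m' f hm'
    have e := Finset.eq_of_subset_of_card_le s (k ▸ hf.card_le hn m.1 hm.1)
    have e' := Finset.eq_of_subset_of_card_le s' (k' ▸ hf.card_le hn m'.1 hm'.1)
    rw [← h, ← e] at e'
    obtain ⟨-, -, -, hab, hbc, -⟩ := hm
    obtain ⟨-, -, -, hab', hbc', -⟩ := hm'
    obtain ⟨i, a, b, c⟩ := m
    obtain ⟨i', a', b', c'⟩ := m'
    dsimp only at *
    have hx := fun x => Finset.ext_iff.1 e' x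
    simp only [Finset.mem_insert, Finset.mem_singleton] at hx
    have h1 := hx a
    have h2 := hx b
    have h3 := hx c
    have h4 := hx a'
    have h5 := hx b'
    have h6 := hx c'
    simp only [Prod.mk.injEq]
    omega
  · exact Or.inr h

lemma moveOk_after {M : ℕ} {f : LConfig} {m m' : Move} (hm : MoveOk M m f)
    (hm' : MoveOk M m' f) (hne : m.1 ≠ m'.1) : MoveOk M m' (applyMove m f) := by
  obtain ⟨i, a, b, c⟩ := m
  obtain ⟨i', a', b', c'⟩ := m'
  obtain ⟨-, -, -, -, -, fa, fb, fc⟩ := hm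
  obtain ⟨h1, h2, h3, h4, h5, fa', fb', fc'⟩ := hm'
  dsimp only at *
  have hfix : ∀ x, f x = i' → applyMove (i, a, b, c) f x = i' := by
    intro x hx
    have ha : x ≠ a := by rintro rfl; omega
    have hb : x ≠ b := by rintro rfl; omega
    have hc : x ≠ c := by rintro rfl; omega
    simp [applyMove, LFire, ha, hb, hc, hx]
  exact ⟨h1, h2, h3, h4, h5, hfix _ fa', hfix _ fb', hfix _ fc'⟩

lemma applyMove_comm {M : ℕ} {f : LConfig} {m m' : Move} (hm : MoveOk M m f)
    (hm' : MoveOk M m' f) (hne : m.1 ≠ m'.1) :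
    applyMove m' (applyMove m f) = applyMove m (applyMove m' f) := by
  obtain ⟨i, a, b, c⟩ := m
  obtain ⟨i', a', b', c'⟩ := m'
  obtain ⟨-, -, -, -, -, fa, fb, fc⟩ := hm
  obtain ⟨-, -, -, -, -, fa', fb', fc'⟩ := hm'
  dsimp only at *
  have hdis : ∀ x y, f x = i → f y = i' → x ≠ y := by rintro x y hx hy rfl; omega
  have := hdis a a' fa fa'
  have := hdis a b' fa fb'
  have := hdis a c' fa fc'
  have := hdis b a' fb fa'
  have := hdis b b' fb fb'
  have := hdis b c' fb fc'
  have := hdis c a' fc fa'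
  have := hdis c b' fc fb'
  have := hdis c c' fc fc'
  funext x
  simp only [applyMove, LFire]
  split_ifs <;> first | rfl | omega

lemma not_terminal {M : ℕ} {f : LConfig} {m : Move} (hm : MoveOk M m f) : ¬ LTerminal M f := by
  intro h
  have h1 := h m.1 hm.1
  have h2 := (three_le_card M m f hm).2.2
  omega

/-- Any legal move can be brought to the front of a stabilizing sequence without changing the
final configuration. -/
lemma exchange {n : ℕ} (hn : 2 ≤ n) (l : List Move) :
    ∀ (f : LConfig) (m : Move), BalancedConfig n f → MoveOk (2 ^ n - 1) m f →
      LLegalSeq (2 ^ n - 1) l f → LTerminal (2 ^ n - 1) (LFireSeq l f) →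
      ∃ l', LLegalSeq (2 ^ n - 1) l' (applyMove m f) ∧
        LFireSeq l' (applyMove m f) = LFireSeq l f := by
  induction l with
  | nil => intro f m _ hm _ ht; exact absurd ht (not_terminal hm)
  | cons m₁ l ih =>
    intro f m hf hm hl ht
    rw [legal_cons] at hl
    obtain ⟨hm₁, hl⟩ := hl
    rw [fireSeq_cons] at ht ⊢
    rcases move_eq_or_node_ne hn hf hm hm₁ with rfl | hne
    · exact ⟨l, hl, rfl⟩
    · obtain ⟨l', hl', he⟩ := ih (applyMove m₁ f) m (hf.fire hn hm₁)
        (moveOk_after hm₁ hm hne.symm) hl ht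
      rw [applyMove_comm hm₁ hm hne.symm] at hl' he
      exact ⟨m₁ :: l', (legal_cons _ _ _ _).2 ⟨moveOk_after hm hm₁ hne, hl'⟩, he⟩

lemma terminal_unique {n : ℕ} (hn : 2 ≤ n) (l₂ : List Move) :
    ∀ (f : LConfig) (l₁ : List Move), BalancedConfig n f →
      LLegalSeq (2 ^ n - 1) l₁ f → LLegalSeq (2 ^ n - 1) l₂ f →
      LTerminal (2 ^ n - 1) (LFireSeq l₁ f) → LTerminal (2 ^ n - 1) (LFireSeq l₂ f) →
      LFireSeq l₁ f = LFireSeq l₂ f := by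
  induction l₂ with
  | nil =>
    intro f l₁ _ h₁ _ _ t₂
    cases l₁ with
    | nil => rfl
    | cons m l => exact absurd t₂ (not_terminal ((legal_cons _ _ _ _).1 h₁).1)
  | cons m l₂ ih =>
    intro f l₁ hf h₁ h₂ t₁ t₂
    rw [legal_cons] at h₂
    obtain ⟨l', hl', he⟩ := exchange hn l₁ f m hf h₂.1 h₁ t₁
    rw [← he]
    exact ih _ l' (hf.fire hn h₂.1) hl' h₂.2 (he ▸ t₁) t₂

/-- For `n ≥ 2`: in every stabilizing sequence with chips `1, …, 2^n − 1`, the root fires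
exactly `2^n − (n + 1)` times; and if `c` is a reachable labeled configuration in which the
root holds exactly 3 chips, every node on levels `2, …, n − 1` holds exactly 2 chips, and
every other node holds no chips, then all stabilizing sequences from `c` end in the same
terminal configuration. -/
theorem stmt7 (n : ℕ) (hn : 2 ≤ n) :
    (∀ l : List Move, LLegalSeq (2 ^ n - 1) l (fun _ => 1) →
      LTerminal (2 ^ n - 1) (LFireSeq l (fun _ => 1)) →
      (l.map (fun m => m.1)).count 1 = 2 ^ n - (n + 1)) ∧
    (∀ c : LConfig, LReachable (2 ^ n - 1) c →
      (chipsAt (2 ^ n - 1) c 1).card = 3 →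
      (∀ v, 2 ≤ v → level v ≤ n - 1 → (chipsAt (2 ^ n - 1) c v).card = 2) →
      (∀ v, 2 ≤ v → n - 1 < level v → (chipsAt (2 ^ n - 1) c v).card = 0) →
      ∀ l₁ l₂ : List Move, LLegalSeq (2 ^ n - 1) l₁ c → LLegalSeq (2 ^ n - 1) l₂ c →
        LTerminal (2 ^ n - 1) (LFireSeq l₁ c) → LTerminal (2 ^ n - 1) (LFireSeq l₂ c) →
        ∀ x ∈ Finset.Icc 1 (2 ^ n - 1), LFireSeq l₁ c x = LFireSeq l₂ c x) := by
  refine ⟨root_count n hn, ?_⟩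
  intro c _ hroot hmid hlow l₁ l₂ h₁ h₂ t₁ t₂ x _
  have hbal : BalancedConfig n c := by
    refine ⟨0, rfl, fun _ _ => rfl, fun _ _ => by simp, ?_⟩
    intro v hv
    have hz : lap 0 v = 0 := by simp [lap]
    rw [hz, add_zero]
    unfold startCount
    split_ifs with h1 h2
    · rw [h1, hroot]; rfl
    · rw [hmid v (by omega) h2]; rfl
    · rw [hlow v (by omega) (by omega)]; rfl
  rw [terminal_unique hn l₂ c l₁ hbal h₁ h₂ t₁ t₂]
end

section
/- Fix n ≥ 1 and any reachable terminal configuration of labeled chip-firing with chips 1, …, 2^n − 1. Let p be a node that is either the root or a right child of its parent (p = 1 or p odd). If level(2p) ≤ n, then the label of the chip at node 2p is smaller than both the label of the chip at p and the label of the chip at node 2p + 1. Symmetrically, if p is the root or a left child of its parent (p = 1 or p even) and level(2p + 1) ≤ n, then the label of the chip at node 2p + 1 is larger than both the label of the chip at p and the label of the chip at node 2p. -/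
/-! ### Firing counts and conservation of chips -/

/-- The number of moves of `l` that fire node `v`. -/
def fires (l : List Move) (v : ℕ) : ℕ := (l.map Prod.fst).count v

@[simp] lemma fires_nil (v : ℕ) : fires [] v = 0 := rfl

@[simp] lemma fires_cons (m : Move) (l : List Move) (v : ℕ) :
    fires (m :: l) v = fires l v + if m.1 = v then 1 else 0 := by
  simp [fires, List.count_cons]

@[simp] lemma fires_append (l₁ l₂ : List Move) (v : ℕ) :
    fires (l₁ ++ l₂) v = fires l₁ v + fires l₂ v := by
  simp [fires]

lemma LFireSeq_append (l₁ l₂ : List Move) (g : LConfig) :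
    LFireSeq (l₁ ++ l₂) g = LFireSeq l₂ (LFireSeq l₁ g) := by
  induction l₁ generalizing g with
  | nil => rfl
  | cons m l ih => obtain ⟨i, a, b, c⟩ := m; exact ih _

lemma LLegalSeq_append (M : ℕ) (l₁ l₂ : List Move) (g : LConfig) :
    LLegalSeq M (l₁ ++ l₂) g ↔ LLegalSeq M l₁ g ∧ LLegalSeq M l₂ (LFireSeq l₁ g) := by
  induction l₁ generalizing g with
  | nil => simp [LLegalSeq, LFireSeq]
  | cons m l ih =>
    obtain ⟨i, a, b, c⟩ := m
    simp only [List.cons_append, LLegalSeq, LFireSeq, ih]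
    tauto

lemma parent_two_mul (v : ℕ) : parent (2 * v) = v := by
  unfold parent; split_ifs <;> omega

lemma parent_two_mul_add_one (v : ℕ) (hv : 1 ≤ v) : parent (2 * v + 1) = v := by
  unfold parent; split_ifs <;> omega

lemma card_chipsAt_LFire (M i a b c : ℕ) (g : LConfig) (v : ℕ) (ha : 1 ≤ a) (hc : c ≤ M)
    (hab : a < b) (hbc : b < c) (ga : g a = i) (gb : g b = i) (gc : g c = i) :
    (chipsAt M (LFire i a b c g) v).card + 3 * (if i = v then 1 else 0) =
      (chipsAt M g v).card + (if 2 * i = v then 1 else 0) + (if parent i = v then 1 else 0) +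
        (if 2 * i + 1 = v then 1 else 0) := by
  have key : ∀ x ∈ Finset.Icc 1 M,
      (if LFire i a b c g x = v then 1 else 0) + (if a = x then if i = v then 1 else 0 else 0)
        + (if b = x then if i = v then 1 else 0 else 0)
        + (if c = x then if i = v then 1 else 0 else 0) =
      (if g x = v then 1 else 0) + (if a = x then if 2 * i = v then 1 else 0 else 0)
        + (if b = x then if parent i = v then 1 else 0 else 0)
        + (if c = x then if 2 * i + 1 = v then 1 else 0 else 0) := by
    intro x _
    unfold LFire
    by_cases h1 : x = a
    · subst h1
      have e1 : ¬ b = x := by omega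
      have e2 : ¬ c = x := by omega
      simp only [if_true, e1, e2, if_false, ga]
      omega
    by_cases h2 : x = b
    · subst h2
      have e1 : ¬ a = x := by omega
      have e2 : ¬ c = x := by omega
      simp only [if_true, e1, e2, h1, if_false, gb]
      omega
    by_cases h3 : x = c
    · subst h3
      have e1 : ¬ a = x := by omega
      have e2 : ¬ b = x := by omega
      simp only [if_true, e1, e2, h1, h2, if_false, gc]
      omega
    · simp [h1, h2, h3, Ne.symm h1, Ne.symm h2, Ne.symm h3]
  have := Finset.sum_congr rfl key
  simp only [Finset.sum_add_distrib, Finset.sum_ite_eq, Finset.mem_Icc] at this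
  have ma : 1 ≤ a ∧ a ≤ M := by omega
  have mb : 1 ≤ b ∧ b ≤ M := by omega
  have mc : 1 ≤ c ∧ c ≤ M := by omega
  simp only [if_pos ma, if_pos mb, if_pos mc] at this
  simp only [chipsAt, Finset.card_filter]
  omega

/-- Conservation of chips at `v`. At the root the self-loop is included, since `parent 1 = 1`. -/
lemma card_chipsAt_LFireSeq (M : ℕ) (l : List Move) (g : LConfig) (hl : LLegalSeq M l g)
    (v : ℕ) (hv : 1 ≤ v) :
    (chipsAt M (LFireSeq l g) v).card + 3 * fires l v =
      (chipsAt M g v).card + fires l (parent v) + fires l (2 * v) + fires l (2 * v + 1) := by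
  induction l generalizing g with
  | nil => simp [LFireSeq]
  | cons m l ih =>
    obtain ⟨i, a, b, c⟩ := m
    obtain ⟨hi, ha, hc, hab, hbc, ga, gb, gc, hl⟩ := hl
    have h1 := ih _ hl
    have h2 := card_chipsAt_LFire M i a b c g v ha hc hab hbc ga gb gc
    have h3 : (if 2 * i = v then 1 else 0) + (if parent i = v then 1 else 0) +
        (if 2 * i + 1 = v then 1 else 0) = (if i = parent v then 1 else 0) +
        (if i = 2 * v then 1 else 0) + (if i = 2 * v + 1 then 1 else 0) := by
      unfold parent
      split_ifs <;> omega
    simp only [LFireSeq, fires_cons]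
    omega

/-- A chip stays at its node as long as this node does not fire. -/
lemma LFireSeq_apply_of_fires_eq_zero (M : ℕ) (l : List Move) (g : LConfig)
    (hl : LLegalSeq M l g) (x v : ℕ) (hx : g x = v) (hf : fires l v = 0) :
    LFireSeq l g x = v := by
  induction l generalizing g with
  | nil => exact hx
  | cons m l ih =>
    obtain ⟨i, a, b, c⟩ := m
    obtain ⟨hi, ha, hc, hab, hbc, ga, gb, gc, hl⟩ := hl
    simp only [fires_cons] at hf
    have hiv : i ≠ v := by intro h; simp [h] at hf
    refine ih _ hl ?_ (by omega)
    have h1 : x ≠ a := by rintro rfl; omega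
    have h2 : x ≠ b := by rintro rfl; omega
    have h3 : x ≠ c := by rintro rfl; omega
    simp [LFire, h1, h2, h3, hx]

lemma exists_last_fire (l : List Move) (v : ℕ) (h : fires l v ≠ 0) :
    ∃ l₁ a b c l₂, l = l₁ ++ (v, a, b, c) :: l₂ ∧ fires l₂ v = 0 := by
  induction l with
  | nil => simp at h
  | cons m l ih =>
    by_cases hl : fires l v = 0
    · obtain ⟨i, a, b, c⟩ := m
      have : i = v := by
        by_contra hne
        simp [hl, hne] at h
      subst this
      exact ⟨[], a, b, c, l, rfl, hl⟩
    · obtain ⟨l₁, a, b, c, l₂, rfl, h2⟩ := ih hl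
      exact ⟨m :: l₁, a, b, c, l₂, rfl, h2⟩

/-! ### The firing counts of a terminating sequence -/

/-- The number of firings of a node lying `m` levels above level `n`. -/
def levelFires (m : ℕ) : ℕ := 2 ^ (m + 1) - (m + 2)

lemma levelFires_add (m : ℕ) : levelFires m + (m + 2) = 2 ^ (m + 1) := by
  have : m + 1 < 2 ^ (m + 1) := Nat.lt_two_pow_self
  unfold levelFires
  omega

lemma levelFires_mono {a b : ℕ} (h : a ≤ b) : levelFires a ≤ levelFires b := by
  induction b, h using Nat.le_induction with
  | base => rfl
  | succ k _ ih =>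
    have h1 := levelFires_add k
    have h2 := levelFires_add (k + 1)
    have h3 : k + 1 < 2 ^ (k + 1) := Nat.lt_two_pow_self
    rw [pow_succ] at h2
    omega

/-- The number of times node `v` fires when `2 ^ n - 1` chips at the root are stabilized. The
truncated subtraction makes it `0` on levels `n` and below. -/
def target (n v : ℕ) : ℕ := levelFires (n - level v)

lemma log_two_mul (v : ℕ) (hv : 1 ≤ v) : Nat.log 2 (2 * v) = Nat.log 2 v + 1 := by
  rw [mul_comm]; exact Nat.log_mul_base (by norm_num) (by omega)

lemma log_two_mul_add_one (v : ℕ) (hv : 1 ≤ v) :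
    Nat.log 2 (2 * v + 1) = Nat.log 2 v + 1 := by
  rw [Nat.log_of_one_lt_of_le (by norm_num) (by omega)]
  congr 2
  omega

lemma target_le_target_parent (n v : ℕ) (hv : 1 ≤ v) : target n v ≤ target n (parent v) := by
  refine levelFires_mono ?_
  unfold parent
  split_ifs with h
  · subst h; rfl
  · have : Nat.log 2 (v / 2) ≤ Nat.log 2 v := Nat.log_mono_right (Nat.div_le_self _ _)
    unfold level
    omega

lemma card_chipsAt_init (M v : ℕ) :
    (chipsAt M (fun _ => 1) v).card = if v = 1 then M else 0 := by
  unfold chipsAt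
  split_ifs with h
  · simp [h]
  · simp [Ne.symm h]

/-- Firing each node `target n` times leaves one chip on every node of levels `1, …, n`. -/
lemma target_balance (n v : ℕ) (hn : 1 ≤ n) (hv : 1 ≤ v) :
    (chipsAt (2 ^ n - 1) (fun _ => 1) v).card + target n (parent v) + target n (2 * v) +
      target n (2 * v + 1) = 3 * target n v + if v < 2 ^ n then 1 else 0 := by
  rw [card_chipsAt_init]
  unfold target level
  rw [log_two_mul v hv, log_two_mul_add_one v hv]
  have z0 : levelFires 0 = 0 := rfl
  have z1 : levelFires 1 = 1 := rfl
  by_cases h : v = 1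
  · subst h
    have : 1 < 2 ^ n := Nat.one_lt_two_pow (by omega)
    simp only [parent, if_true, this, Nat.log_one_right]
    obtain rfl | ⟨m, rfl⟩ : n = 1 ∨ ∃ m, n = m + 2 := by
      by_cases h1 : n = 1
      · exact Or.inl h1
      · exact Or.inr ⟨n - 2, by omega⟩
    · simp [z0]
    · have e1 : m + 2 - (0 + 1) = m + 1 := by omega
      have e2 : m + 2 - (0 + 1 + 1) = m := by omega
      rw [e1, e2]
      have h1 := levelFires_add m
      have h2 := levelFires_add (m + 1)
      have e4 : 2 ^ (m + 2) = 2 * 2 ^ (m + 1) := by ring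
      have e5 : 2 ^ (m + 1 + 1) = 2 * 2 ^ (m + 1) := by ring
      omega
  · have hp : parent v = v / 2 := by simp [parent, h]
    have hlog : Nat.log 2 v = Nat.log 2 (v / 2) + 1 :=
      Nat.log_of_one_lt_of_le (by norm_num) (by omega)
    have hlt : v < 2 ^ n ↔ Nat.log 2 v < n := by
      rw [Nat.log_lt_iff_lt_pow (by norm_num) (by omega)]
    simp only [hlt, hp, h, if_false, hlog]
    generalize Nat.log 2 (v / 2) = k
    obtain hk | hk | ⟨m, hm⟩ : n ≤ k + 1 ∨ n = k + 2 ∨ ∃ m, n = k + m + 3 := by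
      by_cases h1 : n ≤ k + 2
      · omega
      · exact Or.inr (Or.inr ⟨n - k - 3, by omega⟩)
    · have e1 : n - (k + 1) = 0 := by omega
      have e2 : n - (k + 1 + 1) = 0 := by omega
      have e3 : n - (k + 1 + 1 + 1) = 0 := by omega
      rw [e1, e2, e3, if_neg (by omega)]
      omega
    · have e1 : n - (k + 1) = 1 := by omega
      have e2 : n - (k + 1 + 1) = 0 := by omega
      have e3 : n - (k + 1 + 1 + 1) = 0 := by omega
      rw [e1, e2, e3, if_pos (by omega)]
      omega
    · have e1 : n - (k + 1) = m + 2 := by omega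
      have e2 : n - (k + 1 + 1) = m + 1 := by omega
      have e3 : n - (k + 1 + 1 + 1) = m := by omega
      rw [e1, e2, e3, if_pos (by omega)]
      have h1 := levelFires_add m
      have h2 := levelFires_add (m + 1)
      have h3 := levelFires_add (m + 2)
      have e4 : 2 ^ (m + 2 + 1) = 4 * 2 ^ (m + 1) := by ring
      have e5 : 2 ^ (m + 1 + 1) = 2 * 2 ^ (m + 1) := by ring
      omega

lemma one_le_parent (v : ℕ) (hv : 1 ≤ v) : 1 ≤ parent v := by
  unfold parent; split_ifs <;> omega

/-- The least action principle: no legal sequence fires a node more than `target n` times. -/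
lemma fires_le_target (n : ℕ) (hn : 1 ≤ n) (l : List Move)
    (hl : LLegalSeq (2 ^ n - 1) l (fun _ => 1)) (v : ℕ) (hv : 1 ≤ v) :
    fires l v ≤ target n v := by
  induction l using List.reverseRecOn generalizing v with
  | nil => simp
  | append_singleton l m ih =>
    obtain ⟨i, a, b, c⟩ := m
    obtain ⟨hl, hi, ha, hc, hab, hbc, ga, gb, gc, -⟩ := (LLegalSeq_append _ _ _ _).1 hl
    have ih := ih hl
    simp only [fires_append, fires_cons, fires_nil]
    by_cases hiv : i = v
    · rw [hiv] at ga gb gc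
      have hcard : 3 ≤ (chipsAt (2 ^ n - 1) (LFireSeq l fun _ => 1) v).card := by
        have hsub : ({a, b, c} : Finset ℕ) ⊆ chipsAt (2 ^ n - 1) (LFireSeq l fun _ => 1) v := by
          intro x hx
          simp only [Finset.mem_insert, Finset.mem_singleton] at hx
          simp only [chipsAt, Finset.mem_filter, Finset.mem_Icc]
          rcases hx with rfl | rfl | rfl
          · exact ⟨by omega, ga⟩
          · exact ⟨by omega, gb⟩
          · exact ⟨by omega, gc⟩
        refine le_trans (le_of_eq ?_) (Finset.card_le_card hsub)
        rw [Finset.card_eq_three.2 ⟨a, b, c, by omega, by omega, by omega, rfl⟩]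
      have h1 := card_chipsAt_LFireSeq _ l _ hl v hv
      have h2 := target_balance n v hn hv
      have h3 := ih v hv
      have h4 := ih (parent v) (one_le_parent v hv)
      have h5 := ih (2 * v) (by omega)
      have h6 := ih (2 * v + 1) (by omega)
      have h7 : (if v < 2 ^ n then 1 else 0) ≤ 1 := by split_ifs <;> omega
      simp only [hiv, if_true]
      omega
    · have := ih v hv
      simp only [hiv, if_false]
      omega

lemma target_eq_zero (n v : ℕ) (hv : 2 ^ n ≤ v) : target n v = 0 := by
  have : n ≤ Nat.log 2 v := Nat.le_log_of_pow_le (by norm_num) hv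
  unfold target level
  rw [show n - (Nat.log 2 v + 1) = 0 by omega]
  rfl

/-- The maximum principle: a sequence ending in a terminal configuration fires each node at
least `target n` times. -/
lemma target_le_fires (n : ℕ) (hn : 1 ≤ n) (l : List Move)
    (hl : LLegalSeq (2 ^ n - 1) l (fun _ => 1))
    (ht : LTerminal (2 ^ n - 1) (LFireSeq l (fun _ => 1))) (v : ℕ) (hv : 1 ≤ v) :
    target n v ≤ fires l v := by
  by_contra hlt
  push Not at hlt
  let d : ℕ → ℤ := fun v => (target n v : ℤ) - fires l v
  have hout : ∀ w, 2 ^ n ≤ w → d w ≤ 0 := by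
    intro w hw
    simp only [d, target_eq_zero n w hw]
    omega
  have hvd : 0 < d v := by simp only [d]; omega
  have hvr : v < 2 ^ n := by
    by_contra h
    have := hout v (by omega)
    omega
  -- The lexicographic order selects the largest node among those maximizing `d`.
  obtain ⟨w, hw, hmax⟩ := Finset.exists_max_image (Finset.Ico 1 (2 ^ n))
    (fun w => toLex (d w, w)) ⟨v, by simp; omega⟩
  simp only [Finset.mem_Ico] at hw hmax
  have hmaxd : ∀ x, 1 ≤ x → x < 2 ^ n → d x < d w ∨ d x = d w ∧ x ≤ w := by
    intro x h1 h2
    have := hmax x ⟨h1, h2⟩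
    rw [Prod.Lex.toLex_le_toLex] at this
    exact this
  have hwd : 0 < d w := by
    have := hmaxd v hv hvr
    omega
  have hkid : ∀ x, w < x → d x ≤ d w - 1 := by
    intro x hx
    by_cases h : x < 2 ^ n
    · have := hmaxd x (by omega) h
      omega
    · have := hout x (by omega)
      omega
  have hpar : d (parent w) ≤ d w := by
    have h1 := one_le_parent w hw.1
    have h2 : parent w ≤ w := by unfold parent; split_ifs <;> omega
    have := hmaxd (parent w) h1 (by omega)
    omega
  have k1 := hkid (2 * w) (by omega)
  have k2 := hkid (2 * w + 1) (by omega)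
  have h1 := card_chipsAt_LFireSeq _ l _ hl w hw.1
  have h2 := target_balance n w hn hw.1
  have h3 := ht w hw.1
  rw [if_pos hw.2] at h2
  simp only [d] at *
  omega

lemma fires_eq_target (n : ℕ) (hn : 1 ≤ n) (l : List Move)
    (hl : LLegalSeq (2 ^ n - 1) l (fun _ => 1))
    (ht : LTerminal (2 ^ n - 1) (LFireSeq l (fun _ => 1))) (v : ℕ) (hv : 1 ≤ v) :
    fires l v = target n v :=
  le_antisymm (fires_le_target n hn l hl v hv) (target_le_fires n hn l hl ht v hv)

lemma card_final_le_one (n : ℕ) (hn : 1 ≤ n) (l : List Move)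
    (hl : LLegalSeq (2 ^ n - 1) l (fun _ => 1))
    (ht : LTerminal (2 ^ n - 1) (LFireSeq l (fun _ => 1))) (v : ℕ) (hv : 1 ≤ v) :
    (chipsAt (2 ^ n - 1) (LFireSeq l (fun _ => 1)) v).card ≤ 1 := by
  have h1 := card_chipsAt_LFireSeq _ l _ hl v hv
  have h2 := target_balance n v hn hv
  rw [fires_eq_target n hn l hl ht v hv, fires_eq_target n hn l hl ht _ (one_le_parent v hv),
    fires_eq_target n hn l hl ht (2 * v) (by omega),
    fires_eq_target n hn l hl ht (2 * v + 1) (by omega)] at h1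
  have h7 : (if v < 2 ^ n then 1 else 0) ≤ 1 := by split_ifs <;> omega
  omega

/-! ### The order of the last firings -/

/-- Every final segment of the sequence that fires a non-root node also fires its parent; in
other words, the last firing of a node precedes that of its parent. -/
lemma fires_parent_of_fires_child (n : ℕ) (hn : 1 ≤ n) (l : List Move)
    (hl : LLegalSeq (2 ^ n - 1) l (fun _ => 1))
    (ht : LTerminal (2 ^ n - 1) (LFireSeq l (fun _ => 1))) (v : ℕ) (hv : 1 ≤ v) :
    ∀ l₁ s, l = l₁ ++ s → fires s v = 0 → fires s (2 * v) = 0 ∧ fires s (2 * v + 1) = 0 := by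
  induction v using Nat.strong_induction_on with
  | _ v ih =>
  intro l₁ s hls hs
  by_cases h0 : fires l v = 0
  · have e := fires_eq_target n hn l hl ht
    have a1 := target_le_target_parent n (2 * v) (by omega)
    have a2 := target_le_target_parent n (2 * v + 1) (by omega)
    rw [parent_two_mul v] at a1
    rw [parent_two_mul_add_one v hv] at a2
    rw [← e v hv, ← e _ (by omega)] at a1 a2
    have b1 : fires l (2 * v) = fires l₁ (2 * v) + fires s (2 * v) := by
      rw [hls, fires_append]
    have b2 : fires l (2 * v + 1) = fires l₁ (2 * v + 1) + fires s (2 * v + 1) := by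
      rw [hls, fires_append]
    omega
  -- Enlarge `s` to the segment `t ++ s` that starts right after the last firing of `v`.
  obtain ⟨r, a, b, c, t, rfl, ht0⟩ := exists_last_fire l₁ v (by
    have : fires l v = fires l₁ v + fires s v := by rw [hls, fires_append]
    omega)
  have hsplit : l = r ++ ((v, a, b, c) :: (t ++ s)) := by rw [hls]; simp
  have hlegal := hl
  rw [hsplit, LLegalSeq_append] at hlegal
  obtain ⟨-, hi, ha, hc, hab, hbc, ga, gb, gc, hlegal⟩ := hlegal
  have hcons := card_chipsAt_LFireSeq _ _ _ hlegal v hv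
  have hfin := card_final_le_one n hn l hl ht v hv
  have heq : LFireSeq l (fun _ => 1) =
      LFireSeq (t ++ s) (LFire v a b c (LFireSeq r fun _ => 1)) := by
    rw [hsplit, LFireSeq_append]; rfl
  rw [heq] at hfin
  simp only [fires_append] at hcons
  by_cases h1 : v = 1
  · -- The middle chip of the last root firing is already the final chip of the root.
    subst h1
    have hpos : 0 < (chipsAt (2 ^ n - 1) (LFire 1 a b c (LFireSeq r fun _ => 1)) 1).card := by
      refine Finset.card_pos.2 ⟨b, ?_⟩
      simp only [chipsAt, Finset.mem_filter, Finset.mem_Icc]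
      refine ⟨by omega, ?_⟩
      have : b ≠ a := by omega
      simp [LFire, parent, this]
    have hpar : parent 1 = 1 := rfl
    rw [hpar] at hcons
    omega
  · have hp : parent v = v / 2 := by simp [parent, h1]
    have hne : v ≠ v / 2 := by omega
    have hih := ih (v / 2) (by omega) (by omega) r _ hsplit
    have hpos : fires (t ++ s) (v / 2) ≠ 0 := by
      intro h
      have := hih (by simp only [fires_cons, hne, if_false]; omega)
      rcases (by omega : v = 2 * (v / 2) ∨ v = 2 * (v / 2) + 1) with hvv | hvv
      · rw [← hvv] at this
        simp at this
      · rw [← hvv] at this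
        simp at this
    simp only [fires_append] at hpos
    rw [hp] at hcons
    omega

lemma eq_of_mem_chipsAt (M : ℕ) (f : LConfig) (v x y : ℕ) (h : (chipsAt M f v).card ≤ 1)
    (hx : x ∈ Finset.Icc 1 M) (hy : y ∈ Finset.Icc 1 M) (fx : f x = v) (fy : f y = v) :
    x = y :=
  Finset.card_le_one.1 h x (by simp only [chipsAt, Finset.mem_filter]; exact ⟨hx, fx⟩)
    y (by simp only [chipsAt, Finset.mem_filter]; exact ⟨hy, fy⟩)

/-- The middle chip `b` of the last firing of `p` separates the final chips `x` and `z` of the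
two children, and compares with the final chip `y` of `p` because, for `p ≠ 1`, it takes part in
the last firing of the parent of `p`. -/
lemma final_chips (n : ℕ) (hn : 1 ≤ n) (f : LConfig)
    (hreach : LReachable (2 ^ n - 1) f) (hterm : LTerminal (2 ^ n - 1) f)
    (p : ℕ) (hp : 1 ≤ p) (hlev : level p < n) (x y z : ℕ)
    (hx : x ∈ Finset.Icc 1 (2 ^ n - 1)) (hy : y ∈ Finset.Icc 1 (2 ^ n - 1))
    (hz : z ∈ Finset.Icc 1 (2 ^ n - 1)) (fx : f x = 2 * p) (fy : f y = p)
    (fz : f z = 2 * p + 1) :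
    ∃ b, x < b ∧ b < z ∧ (p = 1 → y = b) ∧ (p ≠ 1 → p % 2 = 1 → b ≤ y) ∧
      (p ≠ 1 → p % 2 = 0 → y ≤ b) := by
  obtain ⟨l, hl, rfl⟩ := hreach
  have hone := card_final_le_one n hn l hl hterm
  have hsuf := fires_parent_of_fires_child n hn l hl hterm
  have hfire : fires l p ≠ 0 := by
    rw [fires_eq_target n hn l hl hterm p hp]
    have : levelFires 1 ≤ target n p := levelFires_mono (by omega)
    have h1 : levelFires 1 = 1 := rfl
    omega
  obtain ⟨l₁, a, b, c, l₂, hls, h0⟩ := exists_last_fire l p hfire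
  obtain ⟨k1, k2⟩ := hsuf p hp (l₁ ++ [(p, a, b, c)]) l₂ (by simp [hls]) h0
  have hlegal := hl
  rw [hls, LLegalSeq_append] at hlegal
  obtain ⟨-, -, ha, hc, hab, hbc, ga, gb, gc, hlegal⟩ := hlegal
  have heq : LFireSeq l (fun _ => 1) =
      LFireSeq l₂ (LFire p a b c (LFireSeq l₁ fun _ => 1)) := by
    rw [hls, LFireSeq_append]; rfl
  have hba : b ≠ a := by omega
  have hca : c ≠ a := by omega
  have hcb : c ≠ b := by omega
  have hfb : LFire p a b c (LFireSeq l₁ fun _ => 1) b = parent p := by simp [LFire, hba]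
  have hxa : x = a := by
    refine eq_of_mem_chipsAt _ _ (2 * p) _ _ (hone _ (by omega)) hx
      (by simp only [Finset.mem_Icc]; omega) fx ?_
    rw [heq]
    exact LFireSeq_apply_of_fires_eq_zero _ _ _ hlegal _ _ (by simp [LFire]) k1
  have hzc : z = c := by
    refine eq_of_mem_chipsAt _ _ (2 * p + 1) _ _ (hone _ (by omega)) hz
      (by simp only [Finset.mem_Icc]; omega) fz ?_
    rw [heq]
    exact LFireSeq_apply_of_fires_eq_zero _ _ _ hlegal _ _ (by simp [LFire, hca, hcb]) k2
  refine ⟨b, by omega, by omega, ?_, ?_⟩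
  · rintro rfl
    refine eq_of_mem_chipsAt _ _ 1 _ _ (hone _ (by omega)) hy
      (by simp only [Finset.mem_Icc]; omega) fy ?_
    rw [heq]
    exact LFireSeq_apply_of_fires_eq_zero _ _ _ hlegal _ _ hfb h0
  rw [← imp_and]
  intro hp1
  have hpar : parent p = p / 2 := by simp [parent, hp1]
  obtain ⟨r, hr⟩ : ∃ r, r = p / 2 := ⟨_, rfl⟩
  rw [← hr] at hpar
  have hr1 : 1 ≤ r := by omega
  have hpr : p = 2 * r ∨ p = 2 * r + 1 := by omega
  have hfr : fires l₂ r ≠ 0 := by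
    intro h
    have hne : p ≠ r := by omega
    have := hsuf r hr1 l₁ _ hls (by simp only [fires_cons, hne, if_false]; omega)
    rcases hpr with hvv | hvv
    · rw [← hvv] at this
      simp at this
    · rw [← hvv] at this
      simp at this
  have hcons := card_chipsAt_LFireSeq _ _ _ hlegal p hp
  rw [← heq, h0, k1, k2, hpar] at hcons
  have hone_p := hone p hp
  -- The parent fires exactly once after the last firing of `p`.
  obtain ⟨l₃, a₂, b₂, c₂, l₄, hls2, h40⟩ := exists_last_fire l₂ r hfr
  have h3 : fires l₃ r = 0 := by
    rw [hls2] at hcons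
    simp at hcons
    omega
  have hp4 : fires l₄ p = 0 := by
    rw [hls2] at h0
    simp at h0
    omega
  rw [hls2, LLegalSeq_append] at hlegal
  obtain ⟨hl3, -, ha₂, hc₂, hab₂, hbc₂, ga₂, gb₂, gc₂, hl4⟩ := hlegal
  have hbr := LFireSeq_apply_of_fires_eq_zero _ _ _ hl3 b r (hfb.trans hpar) h3
  rw [hls2, LFireSeq_append] at heq
  change _ = LFireSeq l₄ (LFire r a₂ b₂ c₂ _) at heq
  generalize hg : LFireSeq l₃ (LFire p a b c (LFireSeq l₁ fun _ => 1)) = g at *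
  have hba₂ : b₂ ≠ a₂ := by omega
  have hca₂ : c₂ ≠ a₂ := by omega
  have hcb₂ : c₂ ≠ b₂ := by omega
  have hmem : b = a₂ ∨ b = b₂ ∨ b = c₂ := by
    by_contra hnot
    push Not at hnot
    obtain ⟨n1, n2, n3⟩ := hnot
    have hb4 : LFire r a₂ b₂ c₂ g b = r := by simp [LFire, n1, n2, n3, hbr]
    by_cases hroot : r = 1
    · -- The root keeps the middle chip of its last firing, so it cannot keep `b` as well.
      have e1 := LFireSeq_apply_of_fires_eq_zero _ _ _ hl4 b r hb4 h40
      have e2 := LFireSeq_apply_of_fires_eq_zero _ _ _ hl4 b₂ r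
        (by simp [LFire, hba₂, hroot, parent]) h40
      rw [← heq] at e1 e2
      exact n2 (eq_of_mem_chipsAt _ _ r _ _ (hone r hr1)
        (by simp only [Finset.mem_Icc]; omega) (by simp only [Finset.mem_Icc]; omega) e1 e2)
    · -- Otherwise `r` still receives a chip from its own parent, and again ends with two.
      have hcons4 := card_chipsAt_LFireSeq _ _ _ hl4 r hr1
      have hpos : 0 < (chipsAt (2 ^ n - 1) (LFire r a₂ b₂ c₂ g) r).card := by
        refine Finset.card_pos.2 ⟨b, ?_⟩
        simp only [chipsAt, Finset.mem_filter, Finset.mem_Icc]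
        exact ⟨by omega, hb4⟩
      have hrpar : parent r = r / 2 := by simp [parent, hroot]
      have hfr4 : fires l₄ (r / 2) ≠ 0 := by
        intro h
        have hne : r ≠ r / 2 := by omega
        have := hsuf (r / 2) (by omega) (l₁ ++ (p, a, b, c) :: l₃) ((r, a₂, b₂, c₂) :: l₄)
          (by simp [hls, hls2]) (by simp only [fires_cons, hne, if_false]; omega)
        rcases (by omega : r = 2 * (r / 2) ∨ r = 2 * (r / 2) + 1) with hvv | hvv
        · rw [← hvv] at this
          simp at this
        · rw [← hvv] at this
          simp at this
      have hone_r := hone r hr1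
      rw [← heq, hrpar] at hcons4
      omega
  constructor
  · intro hodd
    have hyc : y = c₂ := by
      refine eq_of_mem_chipsAt _ _ p _ _ hone_p hy
        (by simp only [Finset.mem_Icc]; omega) fy ?_
      rw [heq]
      refine LFireSeq_apply_of_fires_eq_zero _ _ _ hl4 _ _ ?_ hp4
      have : p = 2 * r + 1 := by omega
      simp [LFire, hca₂, hcb₂, this]
    omega
  · intro heven
    have hya : y = a₂ := by
      refine eq_of_mem_chipsAt _ _ p _ _ hone_p hy
        (by simp only [Finset.mem_Icc]; omega) fy ?_
      rw [heq]
      refine LFireSeq_apply_of_fires_eq_zero _ _ _ hl4 _ _ ?_ hp4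
      have : p = 2 * r := by omega
      simp [LFire, this]
    omega

/-- Fix `n ≥ 1` and a reachable terminal configuration with chips `1, …, 2^n − 1`. If `p` is
the root or a right child (`p = 1` or `p` odd) and `level (2p) ≤ n`, then the chip at node
`2p` is smaller than the chips at `p` and at `2p + 1`. Symmetrically, if `p` is the root or a
left child (`p = 1` or `p` even) and `level (2p + 1) ≤ n`, then the chip at node `2p + 1` is
larger than the chips at `p` and at `2p`. -/
theorem stmt8 (n : ℕ) (hn : 1 ≤ n) (f : LConfig)
    (hreach : LReachable (2 ^ n - 1) f) (hterm : LTerminal (2 ^ n - 1) f)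
    (p : ℕ) (hp : 1 ≤ p) :
    ((p = 1 ∨ p % 2 = 1) → level (2 * p) ≤ n →
      ∀ x y z, x ∈ Finset.Icc 1 (2 ^ n - 1) → y ∈ Finset.Icc 1 (2 ^ n - 1) →
        z ∈ Finset.Icc 1 (2 ^ n - 1) →
        f x = 2 * p → f y = p → f z = 2 * p + 1 → x < y ∧ x < z) ∧
    ((p = 1 ∨ p % 2 = 0) → level (2 * p + 1) ≤ n →
      ∀ x y z, x ∈ Finset.Icc 1 (2 ^ n - 1) → y ∈ Finset.Icc 1 (2 ^ n - 1) →
        z ∈ Finset.Icc 1 (2 ^ n - 1) →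
        f x = 2 * p → f y = p → f z = 2 * p + 1 → y < z ∧ x < z) := by
  constructor
  · intro hpar hlev x y z hx hy hz fx fy fz
    have hlevp : level p < n := by
      unfold level at *
      rw [log_two_mul p hp] at hlev
      omega
    obtain ⟨b, h1, h2, h3, h4, -⟩ :=
      final_chips n hn f hreach hterm p hp hlevp x y z hx hy hz fx fy fz
    omega
  · intro hpar hlev x y z hx hy hz fx fy fz
    have hlevp : level p < n := by
      unfold level at *
      rw [log_two_mul_add_one p hp] at hlev
      omega
    obtain ⟨b, h1, h2, h3, -, h5⟩ :=
      final_chips n hn f hreach hterm p hp hlevp x y z hx hy hz fx fy fz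
    omega
end
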